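/- Assume in addition that κ₁(s) = 0 for all s ∈ I (developable case), and define A_k(s) = ⟪σ^{(k)}(s), v₀(s)⟫, B_k(s) = ⟪σ^{(k)}(s), n₀(s)⟫, C_k(s) = ⟪σ^{(k)}(s), t₀(s)⟫ for k ≥ 1, where σ^{(k)} is the k-th derivative of the striction curve σ. Then A₁ = τ₁, B₁ = 0, C₁ = 0, and for every k ≥ 1 the recursion A_{k+1}(s) = A_k'(s) − B_k(s), B_{k+1}(s) = B_k'(s) + A_k(s) − τ₀(s)·C_k(s), C_{k+1}(s) = C_k'(s) + τ₀(s)·B_k(s) holds for all s ∈ I. -/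

import Mathlib

noncomputable section
open scoped RealInnerProductSpace

/-- Euclidean 3-space `ℝ³`. -/
abbrev E3 : Type := EuclideanSpace ℝ (Fin 3)

/-- The cross product on `E3`. -/
def cross (u v : E3) : E3 :=
  (WithLp.equiv 2 (Fin 3 → ℝ)).symm
    ![u 1 * v 2 - u 2 * v 1, u 2 * v 0 - u 0 * v 2, u 0 * v 1 - u 1 * v 0]

/-- Determinant of the 3×3 matrix with columns `u`, `v`, `w`. -/
def det3 (u v w : E3) : ℝ :=
  Matrix.det !![u 0, v 0, w 0; u 1, v 1, w 1; u 2, v 2, w 2]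

namespace Ruled

/-- The director curve `e = v₀`. -/
def e (v₀ : ℝ → E3) : ℝ → E3 := v₀

/-- The base curve `r = v₀ × v₁`. -/
def r (v₀ v₁ : ℝ → E3) : ℝ → E3 := fun s => cross (v₀ s) (v₁ s)

/-- The parametrization `F(s,t) = r(s) + t • e(s)` of the ruled surface. -/
def F (v₀ v₁ : ℝ → E3) (s t : ℝ) : E3 := r v₀ v₁ s + t • v₀ s

/-- `n₀ = v₀'`. -/
def n₀ (v₀ : ℝ → E3) : ℝ → E3 := fun s => deriv v₀ s

/-- `κ₁ = ⟪v₀', v₁'⟫`, the ε-part of the dual curvature. -/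
def κ₁ (v₀ v₁ : ℝ → E3) : ℝ → ℝ := fun s => ⟪deriv v₀ s, deriv v₁ s⟫

/-- `n₁ = v₁' - κ₁ • v₀'`. -/
def n₁ (v₀ v₁ : ℝ → E3) : ℝ → E3 := fun s => deriv v₁ s - κ₁ v₀ v₁ s • deriv v₀ s

/-- `t₀ = v₀ × n₀`. -/
def t₀ (v₀ : ℝ → E3) : ℝ → E3 := fun s => cross (v₀ s) (n₀ v₀ s)

/-- `t₁ = v₀ × n₁ + v₁ × n₀`. -/
def t₁ (v₀ v₁ : ℝ → E3) : ℝ → E3 :=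
  fun s => cross (v₀ s) (n₁ v₀ v₁ s) + cross (v₁ s) (n₀ v₀ s)

/-- `τ₀ = ⟪n₀', t₀⟫`, the real part of the dual torsion. -/
def τ₀ (v₀ : ℝ → E3) : ℝ → ℝ := fun s => ⟪deriv (n₀ v₀) s, t₀ v₀ s⟫

/-- `τ₁ = ⟪n₀', t₁⟫ + ⟪n₁', t₀⟫`, the ε-part of the dual torsion. -/
def τ₁ (v₀ v₁ : ℝ → E3) : ℝ → ℝ :=
  fun s => ⟪deriv (n₀ v₀) s, t₁ v₀ v₁ s⟫ + ⟪deriv (n₁ v₀ v₁) s, t₀ v₀ s⟫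

/-- The striction curve `σ(s) = r(s) - ⟪r'(s), e'(s)⟫ • e(s)`. -/
def strict (v₀ v₁ : ℝ → E3) : ℝ → E3 :=
  fun s => r v₀ v₁ s - ⟪deriv (r v₀ v₁) s, deriv (e v₀) s⟫ • e v₀ s

end Ruled

open Ruled

lemma inner_E3 (u v : E3) : ⟪u, v⟫ = u 0 * v 0 + u 1 * v 1 + u 2 * v 2 := by
  simp [PiLp.inner_apply, Fin.sum_univ_three]
  ring

lemma cross_0 (u v : E3) : cross u v 0 = u 1 * v 2 - u 2 * v 1 := rfl
lemma cross_1 (u v : E3) : cross u v 1 = u 2 * v 0 - u 0 * v 2 := rfl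
lemma cross_2 (u v : E3) : cross u v 2 = u 0 * v 1 - u 1 * v 0 := rfl

lemma E3_ext {u v : E3} (h0 : u 0 = v 0) (h1 : u 1 = v 1) (h2 : u 2 = v 2) : u = v := by
  ext i
  fin_cases i
  · exact h0
  · exact h1
  · exact h2

lemma cross_bilin : IsBilinearMap ℝ cross where
  add_left x y z := by
    apply E3_ext <;> simp only [cross_0, cross_1, cross_2, PiLp.add_apply] <;> ring
  smul_left c x y := by
    apply E3_ext <;> simp only [cross_0, cross_1, cross_2, PiLp.smul_apply, smul_eq_mul] <;> ring
  add_right x y z := by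
    apply E3_ext <;> simp only [cross_0, cross_1, cross_2, PiLp.add_apply] <;> ring
  smul_right c x y := by
    apply E3_ext <;> simp only [cross_0, cross_1, cross_2, PiLp.smul_apply, smul_eq_mul] <;> ring

lemma cross_self' (u : E3) : cross u u = 0 := by
  apply E3_ext <;> simp only [cross_0, cross_1, cross_2, PiLp.zero_apply] <;> ring

lemma cross_cross' (u w : E3) : cross u (cross u w) = ⟪u, w⟫ • u - ⟪u, u⟫ • w := by
  apply E3_ext <;> simp only [cross_0, cross_1, cross_2, PiLp.smul_apply, PiLp.sub_apply,
    smul_eq_mul, inner_E3] <;> ring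

lemma lagrange (a b c d : E3) :
    ⟪cross a b, cross c d⟫ = ⟪a, c⟫ * ⟪b, d⟫ - ⟪a, d⟫ * ⟪b, c⟫ := by
  simp only [inner_E3, cross_0, cross_1, cross_2]; ring

lemma triple (a b c : E3) : ⟪cross a b, c⟫ = ⟪a, cross b c⟫ := by
  simp only [inner_E3, cross_0, cross_1, cross_2]; ring

lemma triple' (a b c : E3) : ⟪cross a b, c⟫ = -⟪b, cross a c⟫ := by
  simp only [inner_E3, cross_0, cross_1, cross_2]; ring

lemma hasDerivAt_cross {f g : ℝ → E3} {f' g' : E3} {s : ℝ}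
    (hf : HasDerivAt f f' s) (hg : HasDerivAt g g' s) :
    HasDerivAt (fun u => cross (f u) (g u)) (cross (f s) g' + cross f' (g s)) s :=
  cross_bilin.toContinuousBilinearMap.hasDerivAt_of_bilinear (fun _ => hf) (fun _ => hg)

lemma contDiffOn_cross {f g : ℝ → E3} {I : Set ℝ}
    (hf : ContDiffOn ℝ (⊤ : ℕ∞) f I) (hg : ContDiffOn ℝ (⊤ : ℕ∞) g I) :
    ContDiffOn ℝ (⊤ : ℕ∞) (fun u => cross (f u) (g u)) I :=
  (cross_bilin.toContinuousBilinearMap.contDiff.comp_contDiffOn hf).clm_apply hg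

lemma frame_expand {u w : E3} (hu : ⟪u, u⟫ = 1) (hw : ⟪w, w⟫ = 1) (huw : ⟪u, w⟫ = 0) (x : E3) :
    x = ⟪x, u⟫ • u + ⟪x, w⟫ • w + ⟪x, cross u w⟫ • cross u w := by
  have ht : ⟪cross u w, cross u w⟫ = 1 := by
    rw [lagrange, real_inner_comm u w, hu, hw, huw]; ring
  have hut : ⟪u, cross u w⟫ = 0 := by simp only [inner_E3, cross_0, cross_1, cross_2]; ring
  have hwt : ⟪w, cross u w⟫ = 0 := by simp only [inner_E3, cross_0, cross_1, cross_2]; ring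
  set t := cross u w
  rw [inner_E3] at hu hw huw ht hut hwt
  have hM : !![u 0, u 1, u 2; w 0, w 1, w 2; t 0, t 1, t 2] *
      !![u 0, w 0, t 0; u 1, w 1, t 1; u 2, w 2, t 2] = (1 : Matrix (Fin 3) (Fin 3) ℝ) := by
    ext i j
    fin_cases i <;> fin_cases j <;> simp [Matrix.mul_apply, Fin.sum_univ_three] <;> linarith
  have hM' := mul_eq_one_comm.mp hM
  have h (i j) := congrFun (congrFun hM' i) j
  have h00 := h 0 0
  have h01 := h 0 1
  have h02 := h 0 2
  have h11 := h 1 1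
  have h12 := h 1 2
  have h22 := h 2 2
  simp [Matrix.mul_apply, Fin.sum_univ_three] at h00 h01 h02 h11 h12 h22
  apply E3_ext <;> simp only [PiLp.add_apply, PiLp.smul_apply, smul_eq_mul, inner_E3]
  · linear_combination (-x 0) * h00 - x 1 * h01 - x 2 * h02
  · linear_combination (-x 0) * h01 - x 1 * h11 - x 2 * h12
  · linear_combination (-x 0) * h02 - x 1 * h12 - x 2 * h22

lemma contDiffOn_deriv {E : Type*} [NormedAddCommGroup E] [NormedSpace ℝ E] {f : ℝ → E}
    {I : Set ℝ} (hI : IsOpen I)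
    (hf : ContDiffOn ℝ (⊤ : ℕ∞) f I) : ContDiffOn ℝ (⊤ : ℕ∞) (deriv f) I :=
  ((contDiffOn_infty_iff_deriv_of_isOpen hI).mp hf).2

lemma hasDerivAt_of_smooth {E : Type*} [NormedAddCommGroup E] [NormedSpace ℝ E] {f : ℝ → E}
    {I : Set ℝ} (hI : IsOpen I)
    (hf : ContDiffOn ℝ (⊤ : ℕ∞) f I) {s : ℝ} (hs : s ∈ I) : HasDerivAt f (deriv f s) s :=
  ((((contDiffOn_infty_iff_deriv_of_isOpen hI).mp hf).1).differentiableAt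
    (hI.mem_nhds hs)).hasDerivAt

lemma deriv_inner_const {f g : ℝ → E3} {f' g' : E3} {I : Set ℝ} (hI : IsOpen I) {c : ℝ}
    (h : ∀ s ∈ I, ⟪f s, g s⟫ = c) {s : ℝ} (hs : s ∈ I)
    (hf : HasDerivAt f f' s) (hg : HasDerivAt g g' s) : ⟪f s, g'⟫ + ⟪f', g s⟫ = 0 := by
  have h1 := hf.inner ℝ hg
  have h2 : (fun t => ⟪f t, g t⟫) =ᶠ[nhds s] fun _ => c := by
    filter_upwards [hI.mem_nhds hs] with t ht using h t ht
  exact h1.unique ((hasDerivAt_const s c).congr_of_eventuallyEq h2)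

/-- In the developable case, the frame components `A_k = ⟪σ⁽ᵏ⁾, v₀⟫`, `B_k = ⟪σ⁽ᵏ⁾, n₀⟫`,
`C_k = ⟪σ⁽ᵏ⁾, t₀⟫` of the derivatives of the striction curve satisfy `A₁ = τ₁`,
`B₁ = C₁ = 0` and the Frenet recursion. -/
theorem striction_frame_recursion
    (I : Set ℝ) (v₀ v₁ : ℝ → E3)
    (hI : IsOpen I) (hI' : I.OrdConnected)
    (hv₀ : ContDiffOn ℝ (⊤ : ℕ∞) v₀ I) (hv₁ : ContDiffOn ℝ (⊤ : ℕ∞) v₁ I)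
    (hunit : ∀ s ∈ I, ‖v₀ s‖ = 1) (horth : ∀ s ∈ I, ⟪v₀ s, v₁ s⟫ = 0)
    (harc : ∀ s ∈ I, ‖deriv v₀ s‖ = 1)
    (hdev : ∀ s ∈ I, κ₁ v₀ v₁ s = 0) :
    (∀ s ∈ I,
      ⟪iteratedDeriv 1 (strict v₀ v₁) s, v₀ s⟫ = τ₁ v₀ v₁ s ∧
      ⟪iteratedDeriv 1 (strict v₀ v₁) s, n₀ v₀ s⟫ = 0 ∧
      ⟪iteratedDeriv 1 (strict v₀ v₁) s, t₀ v₀ s⟫ = 0) ∧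
    ∀ k : ℕ, 1 ≤ k → ∀ s ∈ I,
      ⟪iteratedDeriv (k + 1) (strict v₀ v₁) s, v₀ s⟫ =
        deriv (fun u => ⟪iteratedDeriv k (strict v₀ v₁) u, v₀ u⟫) s -
          ⟪iteratedDeriv k (strict v₀ v₁) s, n₀ v₀ s⟫ ∧
      ⟪iteratedDeriv (k + 1) (strict v₀ v₁) s, n₀ v₀ s⟫ =
        deriv (fun u => ⟪iteratedDeriv k (strict v₀ v₁) u, n₀ v₀ u⟫) s +
          ⟪iteratedDeriv k (strict v₀ v₁) s, v₀ s⟫ -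
          τ₀ v₀ s * ⟪iteratedDeriv k (strict v₀ v₁) s, t₀ v₀ s⟫ ∧
      ⟪iteratedDeriv (k + 1) (strict v₀ v₁) s, t₀ v₀ s⟫ =
        deriv (fun u => ⟪iteratedDeriv k (strict v₀ v₁) u, t₀ v₀ u⟫) s +
          τ₀ v₀ s * ⟪iteratedDeriv k (strict v₀ v₁) s, n₀ v₀ s⟫ := by
  have hn₀ : ContDiffOn ℝ (⊤ : ℕ∞) (n₀ v₀) I := contDiffOn_deriv hI hv₀
  have hw : ContDiffOn ℝ (⊤ : ℕ∞) (deriv v₁) I := contDiffOn_deriv hI hv₁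
  have ht₀ : ContDiffOn ℝ (⊤ : ℕ∞) (t₀ v₀) I := contDiffOn_cross hv₀ hn₀
  have hr : ContDiffOn ℝ (⊤ : ℕ∞) (r v₀ v₁) I := contDiffOn_cross hv₀ hv₁
  have hσ : ContDiffOn ℝ (⊤ : ℕ∞) (strict v₀ v₁) I :=
    hr.sub (((contDiffOn_deriv hI hr).inner ℝ (contDiffOn_deriv hI hv₀)).smul hv₀)
  have dv {s} (hs : s ∈ I) : HasDerivAt v₀ (n₀ v₀ s) s := hasDerivAt_of_smooth hI hv₀ hs
  have dn {s} (hs : s ∈ I) : HasDerivAt (n₀ v₀) (deriv (n₀ v₀) s) s :=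
    hasDerivAt_of_smooth hI hn₀ hs
  have dv₁ {s} (hs : s ∈ I) : HasDerivAt v₁ (deriv v₁ s) s := hasDerivAt_of_smooth hI hv₁ hs
  have dw {s} (hs : s ∈ I) : HasDerivAt (deriv v₁) (deriv (deriv v₁) s) s :=
    hasDerivAt_of_smooth hI hw hs
  have ee : ∀ s ∈ I, ⟪v₀ s, v₀ s⟫ = 1 := fun s hs => by
    rw [real_inner_self_eq_norm_sq, hunit s hs]; norm_num
  have nn : ∀ s ∈ I, ⟪n₀ v₀ s, n₀ v₀ s⟫ = 1 := fun s hs => by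
    rw [real_inner_self_eq_norm_sq, n₀, harc s hs]; norm_num
  have en : ∀ s ∈ I, ⟪v₀ s, n₀ v₀ s⟫ = 0 := fun s hs => by
    have := deriv_inner_const hI ee hs (dv hs) (dv hs)
    rw [real_inner_comm (v₀ s) (n₀ v₀ s)] at this
    linarith
  have nm : ∀ s ∈ I, ⟪deriv (n₀ v₀) s, n₀ v₀ s⟫ = 0 := fun s hs => by
    have := deriv_inner_const hI nn hs (dn hs) (dn hs)
    rw [real_inner_comm (deriv (n₀ v₀) s) (n₀ v₀ s)] at this
    linarith
  have em : ∀ s ∈ I, ⟪deriv (n₀ v₀) s, v₀ s⟫ = -1 := fun s hs => by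
    have := deriv_inner_const hI en hs (dv hs) (dn hs)
    rw [nn s hs, real_inner_comm] at this
    linarith
  have hm : ∀ s ∈ I, deriv (n₀ v₀) s = -v₀ s + τ₀ v₀ s • t₀ v₀ s := fun s hs => by
    have := frame_expand (ee s hs) (nn s hs) (en s hs) (deriv (n₀ v₀) s)
    rw [nm s hs, em s hs] at this
    rw [zero_smul, add_zero, neg_one_smul] at this
    exact this
  have dt : ∀ s ∈ I, HasDerivAt (t₀ v₀) (-(τ₀ v₀ s • n₀ v₀ s)) s := fun s hs => by
    have h := hasDerivAt_cross (dv hs) (dn hs)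
    have e1 : cross (v₀ s) (deriv (n₀ v₀) s) + cross (n₀ v₀ s) (n₀ v₀ s)
        = -(τ₀ v₀ s • n₀ v₀ s) := by
      rw [hm s hs, cross_self', cross_bilin.add_right, cross_bilin.smul_right, t₀, cross_cross',
        en s hs, ee s hs, ← neg_one_smul ℝ (v₀ s), cross_bilin.smul_right, cross_self']
      simp
    rw [e1] at h
    exact h
  have hσd : ∀ s ∈ I, HasDerivAt (strict v₀ v₁)
      (cross (v₀ s) (deriv v₁ s) + cross (n₀ v₀ s) (v₁ s)
        + (⟪deriv v₁ s, t₀ v₀ s⟫ • n₀ v₀ s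
          + ⟪deriv (deriv v₁) s, t₀ v₀ s⟫ • v₀ s)) s := fun s hs => by
    have h1 := hasDerivAt_cross (dv hs) (dv₁ hs)
    have h2 := ((dw hs).inner ℝ (dt s hs)).smul (dv hs)
    have h3 := h1.add h2
    have e0 : ⟪deriv v₁ s, -(τ₀ v₀ s • n₀ v₀ s)⟫ = 0 := by
      have := hdev s hs
      rw [κ₁, real_inner_comm] at this
      rw [inner_neg_right, inner_smul_right, n₀, this]; simp
    rw [e0, zero_add] at h3
    refine h3.congr_of_eventuallyEq ?_
    filter_upwards [hI.mem_nhds hs] with u hu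
    have e2 : deriv (r v₀ v₁) u = _ := (hasDerivAt_cross (dv hu) (dv₁ hu)).deriv
    have e3 : ⟪deriv (r v₀ v₁) u, deriv (e v₀) u⟫ = -⟪deriv v₁ u, t₀ v₀ u⟫ := by
      change ⟪deriv (r v₀ v₁) u, n₀ v₀ u⟫ = -⟪deriv v₁ u, cross (v₀ u) (n₀ v₀ u)⟫
      rw [e2]
      simp only [inner_E3, PiLp.add_apply, cross_0, cross_1, cross_2]
      ring
    rw [strict, e3, neg_smul, sub_neg_eq_add]
    rfl
  refine ⟨fun s hs => ?_, ?_⟩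
  · rw [iteratedDeriv_one, (hσd s hs).deriv]
    have hwn : ⟪deriv v₁ s, n₀ v₀ s⟫ = 0 := by
      have := hdev s hs
      rwa [κ₁, real_inner_comm] at this
    have hn1 : deriv (n₁ v₀ v₁) s = deriv (deriv v₁) s := by
      apply Filter.EventuallyEq.deriv_eq
      filter_upwards [hI.mem_nhds hs] with u hu
      rw [n₁, hdev u hu]; simp
    have hn1' : n₁ v₀ v₁ s = deriv v₁ s := by rw [n₁, hdev s hs]; simp
    have hs1 := ee s hs
    have hs2 := nn s hs
    have hs3 := en s hs
    have hs4 := horth s hs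
    have hne : ⟪n₀ v₀ s, v₀ s⟫ = 0 := by rw [real_inner_comm]; exact hs3
    have hv1e : ⟪v₁ s, v₀ s⟫ = 0 := by rw [real_inner_comm]; exact hs4
    refine ⟨?_, ?_, ?_⟩
    · have a1 : ⟪cross (v₀ s) (deriv v₁ s), v₀ s⟫ = 0 := by
        simp only [inner_E3, cross_0, cross_1, cross_2]; ring
      have a2 : ⟪t₀ v₀ s, cross (v₀ s) (deriv v₁ s)⟫ = 0 := by
        rw [t₀, lagrange, hs1, hne, real_inner_comm, hwn]; ring
      have a3 : ⟪t₀ v₀ s, cross (v₁ s) (n₀ v₀ s)⟫ = 0 := by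
        rw [t₀, lagrange, hs4, hs3]; ring
      have a4 : ⟪v₀ s, cross (v₀ s) (deriv v₁ s)⟫ = 0 := by
        rw [real_inner_comm]; exact a1
      have a5 : ⟪cross (n₀ v₀ s) (v₁ s), v₀ s⟫ = -⟪v₀ s, cross (v₁ s) (n₀ v₀ s)⟫ := by
        simp only [inner_E3, cross_0, cross_1, cross_2]; ring
      rw [τ₁, t₁, hn1, hn1', hm s hs]
      simp only [inner_add_left, inner_add_right, inner_neg_left, real_inner_smul_left,
        a1, a2, a3, a4, a5, hs1, hne]
      ring
    · have a1 : ⟪cross (n₀ v₀ s) (v₁ s), n₀ v₀ s⟫ = 0 := by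
        simp only [inner_E3, cross_0, cross_1, cross_2]; ring
      simp only [inner_add_left, real_inner_smul_left, a1, hs2, hs3, triple', t₀]
      ring
    · have a1 : ⟪v₀ s, t₀ v₀ s⟫ = 0 := by
        simp only [t₀, inner_E3, cross_0, cross_1, cross_2]; ring
      have a2 : ⟪n₀ v₀ s, t₀ v₀ s⟫ = 0 := by
        simp only [t₀, inner_E3, cross_0, cross_1, cross_2]; ring
      simp only [inner_add_left, real_inner_smul_left, a1, a2]
      simp only [t₀, lagrange, hs1, hs2, hs3, hne, hwn, hv1e]
      ring
  · intro k _ s hs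
    have hk : ∀ k, ContDiffOn ℝ (⊤ : ℕ∞) (iteratedDeriv k (strict v₀ v₁)) I := by
      intro k
      induction k with
      | zero => simpa using hσ
      | succ k ih => rw [iteratedDeriv_succ]; exact contDiffOn_deriv hI ih
    have dk := hasDerivAt_of_smooth hI (hk k) hs
    rw [← iteratedDeriv_succ] at dk
    refine ⟨?_, ?_, ?_⟩
    · rw [(dk.inner ℝ (dv hs)).deriv]; ring
    · rw [(dk.inner ℝ (dn hs)).deriv, hm s hs, inner_add_right, inner_neg_right,
        real_inner_smul_right]
      ring
    · rw [(dk.inner ℝ (dt s hs)).deriv, inner_neg_right, real_inner_smul_right]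
      ring
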